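/- For every positive integer n, the Fibonomial coefficient C(4n, n)_F is odd if and only if n = 2^k for some integer k ≥ 0. -/

import Mathlib

/-!
Write `D m = F_1 F_2 ⋯ F_m`, so that `C(4n, n)_F = D (4n) / (D n * D (3n))`; the quotient is exact
because `D a * D b ∣ D (a + b)`, by induction from `F_{a+b+2} = F_{a+1} F_b + F_{a+2} F_{b+1}`.

The number `F_m` is even exactly when `m = 3j`, and then `v₂(F_{3j}) = v₂(j) + 1 + [j even]`, which
follows from `F_{2m} = F_m (2 F_{m+1} - F_m)` and congruences modulo 8. Summing,
`v₂(D m) = v₂(a!) + a + ⌊a/2⌋` with `a = ⌊m/3⌋`. Put `q = ⌊n/3⌋`. Since `⌊4n/3⌋ = q + n`, this gives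
`v₂(C(4n, n)_F) = v₂(binom(q + n, q)) + [q and n both odd]`, and when `q` and `n` are both odd the
binomial coefficient is already even. Hence `C(4n, n)_F` is odd iff `binom(q + n, q)` is.

By Lucas' theorem the latter holds for `n` iff it holds for `⌊n/2⌋` and `n`, `⌊n/3⌋` are not both
odd, because `⌊⌊n/2⌋/3⌋ = ⌊⌊n/3⌋/2⌋`. Induction on the binary expansion shows that this singles out
the powers of two: `n = 2^(j+1) + 1` is excluded since then `⌊n/3⌋` is odd.
-/

/-- The Fibonomial coefficient `C(m,k)_F = (F_{m-k+1} ⋯ F_m)/(F_1 ⋯ F_k)`,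
with `C(m,0)_F = 1` and `C(m,k)_F = 0` for `k > m`. -/
def fibBinom (m k : ℕ) : ℕ :=
  (∏ i ∈ Finset.range k, Nat.fib (m - i)) / ∏ i ∈ Finset.range k, Nat.fib (i + 1)

/-- The rank of appearance `z(n)`: the least positive `m` with `n ∣ F_m`. -/
noncomputable def fibRank (n : ℕ) : ℕ := sInf {m : ℕ | 0 < m ∧ n ∣ Nat.fib m}

/-- The sum of the digits of `n` in base `q`. -/
def digitSum (q n : ℕ) : ℕ := (Nat.digits q n).sum

/-- The Fibonacci factorial `F_1 F_2 ⋯ F_m`. -/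
def fibFact (m : ℕ) : ℕ := ∏ i ∈ Finset.range m, Nat.fib (i + 1)

lemma fibFact_succ (m : ℕ) : fibFact (m + 1) = fibFact m * Nat.fib (m + 1) :=
  Finset.prod_range_succ _ _

lemma fibFact_ne_zero (m : ℕ) : fibFact m ≠ 0 :=
  Finset.prod_ne_zero_iff.2 fun i _ => Nat.pos_iff_ne_zero.1 (Nat.fib_pos.2 i.succ_pos)

/-- Integrality of the Fibonomial coefficients. -/
lemma fibFact_mul_dvd (s : ℕ) : ∀ a b, a + b = s → fibFact a * fibFact b ∣ fibFact s := by
  induction s with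
  | zero =>
    intro a b h
    obtain ⟨rfl, rfl⟩ : a = 0 ∧ b = 0 := by omega
    simp [fibFact]
  | succ s ih =>
    intro a b h
    rcases a with _ | a
    · obtain rfl : b = s + 1 := by omega
      simp [fibFact]
    rcases b with _ | b
    · obtain rfl : a = s := by omega
      simp [fibFact]
    have hs : s = a + b + 1 := by omega
    have h1 := ih a (b + 1) (by omega)
    have h2 := ih (a + 1) b (by omega)
    have hf : Nat.fib (s + 1) =
        Nat.fib (a + 1) * Nat.fib b + Nat.fib (a + 2) * Nat.fib (b + 1) := by
      rw [← Nat.fib_add]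
      congr 1
      omega
    rw [fibFact_succ s, hf, mul_add]
    apply dvd_add
    · rw [fibFact_succ a]
      calc _ = fibFact a * fibFact (b + 1) * Nat.fib (a + 1) := by ring
        _ ∣ fibFact s * Nat.fib (a + 1) := mul_dvd_mul_right h1 _
        _ ∣ _ := ⟨Nat.fib b, by ring⟩
    · rw [fibFact_succ b]
      calc _ = fibFact (a + 1) * fibFact b * Nat.fib (b + 1) := by ring
        _ ∣ fibFact s * Nat.fib (b + 1) := mul_dvd_mul_right h2 _
        _ ∣ _ := ⟨Nat.fib (a + 2), by ring⟩

lemma prod_fib_sub_mul_fibFact (b k : ℕ) :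
    (∏ i ∈ Finset.range k, Nat.fib (b + k - i)) * fibFact b = fibFact (b + k) := by
  induction k with
  | zero => simp
  | succ k ih =>
    rw [Finset.prod_range_succ', ← add_assoc, fibFact_succ, ← ih]
    simp only [Nat.add_sub_add_right, Nat.sub_zero]
    ring

lemma fibBinom_mul (b k : ℕ) :
    fibBinom (b + k) k * (fibFact k * fibFact b) = fibFact (b + k) := by
  have h : fibFact k ∣ ∏ i ∈ Finset.range k, Nat.fib (b + k - i) := by
    apply Nat.dvd_of_mul_dvd_mul_right (Nat.pos_of_ne_zero (fibFact_ne_zero b))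
    rw [prod_fib_sub_mul_fibFact]
    exact fibFact_mul_dvd _ _ _ (add_comm _ _)
  rw [← prod_fib_sub_mul_fibFact, ← mul_assoc]
  congr 1
  exact Nat.div_mul_cancel h

/-- Stepping the index by 3 swaps the two cases. -/
lemma fib_three_mul_mod (j : ℕ) :
    (j % 2 = 0 → Nat.fib (3 * j) % 8 = 0 ∧ Nat.fib (3 * j + 1) % 4 = 1) ∧
    (j % 2 = 1 → Nat.fib (3 * j) % 8 = 2 ∧ Nat.fib (3 * j + 1) % 4 = 3) := by
  induction j with
  | zero => simp
  | succ j ih =>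
    have h1 : Nat.fib (3 * (j + 1)) = 2 * Nat.fib (3 * j + 1) + Nat.fib (3 * j) := by
      rw [show 3 * (j + 1) = 3 * j + 1 + 2 by ring, Nat.fib_add_two, Nat.fib_add_two]
      ring
    have h2 : Nat.fib (3 * (j + 1) + 1) = 3 * Nat.fib (3 * j + 1) + 2 * Nat.fib (3 * j) := by
      have h3 := Nat.fib_add_two (n := 3 * j)
      have h4 := Nat.fib_add_two (n := 3 * j + 1)
      have h5 := Nat.fib_add_two (n := 3 * j + 2)
      simp only [mul_add, add_assoc, Nat.reduceAdd, Nat.reduceMul] at *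
      omega
    rw [h1, h2]
    omega

lemma padicValNat_two_of_mod_four {x : ℕ} (h : x % 4 = 2) : padicValNat 2 x = 1 := by
  obtain ⟨y, rfl⟩ : 2 ∣ x := by omega
  rw [padicValNat.mul (by norm_num) (by omega), padicValNat.self (by norm_num),
    padicValNat.eq_zero_of_not_dvd (by omega)]

lemma padicValNat_two_of_mod_eight {x : ℕ} (h : x % 8 = 4) : padicValNat 2 x = 2 := by
  obtain ⟨y, rfl⟩ : 2 ∣ x := by omega
  rw [padicValNat.mul (by norm_num) (by omega), padicValNat.self (by norm_num),
    padicValNat_two_of_mod_four (by omega)]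

/-- The summand `1 - j % 2` is the indicator of `j` being even. -/
lemma padicValNat_fib_three_mul (j : ℕ) (hj : 0 < j) :
    padicValNat 2 (Nat.fib (3 * j)) = padicValNat 2 j + 1 + (1 - j % 2) := by
  induction j using Nat.strong_induction_on with
  | _ j ih =>
    have hm := fib_three_mul_mod j
    rcases Nat.mod_two_eq_zero_or_one j with h | h
    · obtain ⟨i, rfl⟩ : 2 ∣ j := by omega
      have hi : 0 < i := by omega
      have hf : Nat.fib (3 * i) ≠ 0 := (Nat.fib_pos.2 (by omega)).ne'
      have hle : Nat.fib (3 * i) ≤ Nat.fib (3 * i + 1) := Nat.fib_le_fib_succ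
      have hmi := fib_three_mul_mod i
      rw [show 3 * (2 * i) = 2 * (3 * i) by ring, Nat.fib_two_mul,
        padicValNat.mul hf (by omega), ih i (by omega) hi,
        padicValNat.mul (by norm_num) hi.ne', padicValNat.self (by norm_num)]
      rcases Nat.mod_two_eq_zero_or_one i with h' | h'
      · rw [padicValNat_two_of_mod_four
          (x := 2 * Nat.fib (3 * i + 1) - Nat.fib (3 * i)) (by omega)]
        omega
      · rw [padicValNat_two_of_mod_eight
          (x := 2 * Nat.fib (3 * i + 1) - Nat.fib (3 * i)) (by omega)]
        omega
    · rw [padicValNat_two_of_mod_four (by omega), padicValNat.eq_zero_of_not_dvd (by omega)]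
      omega

lemma fib_odd_of_not_three_dvd {m : ℕ} (h : m % 3 ≠ 0) : ¬ 2 ∣ Nat.fib m := by
  have hm := fib_three_mul_mod (m / 3)
  rcases (by omega : m = 3 * (m / 3) + 1 ∨ m = 3 * (m / 3) + 2) with h | h
  · rw [h]
    omega
  · rw [h, Nat.fib_add_two]
    omega

lemma padicValNat_fibFact (m : ℕ) :
    padicValNat 2 (fibFact m) = padicValNat 2 (m / 3).factorial + m / 3 + m / 3 / 2 := by
  induction m with
  | zero => simp [fibFact]
  | succ m ih =>
    rw [fibFact_succ, padicValNat.mul (fibFact_ne_zero m) (Nat.fib_pos.2 (by omega)).ne', ih]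
    by_cases h : (m + 1) % 3 = 0
    · obtain ⟨a, ha⟩ : 3 ∣ m + 1 := by omega
      obtain ⟨b, rfl⟩ : ∃ b, a = b + 1 := ⟨a - 1, by omega⟩
      rw [ha, padicValNat_fib_three_mul _ (by omega), show m / 3 = b by omega,
        show 3 * (b + 1) / 3 = b + 1 by omega, Nat.factorial_succ,
        padicValNat.mul (by omega) b.factorial_ne_zero]
      omega
    · rw [padicValNat.eq_zero_of_not_dvd (fib_odd_of_not_three_dvd h),
        show (m + 1) / 3 = m / 3 by omega]
      omega

/-- Lucas' theorem modulo 2 for `binom(a + b, b)`. -/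
lemma odd_choose_add_iff (a b : ℕ) :
    ¬ 2 ∣ (a + b).choose b ↔
      ¬ (a % 2 = 1 ∧ b % 2 = 1) ∧ ¬ 2 ∣ (a / 2 + b / 2).choose (b / 2) := by
  have : Fact (Nat.Prime 2) := ⟨Nat.prime_two⟩
  have hL := Choose.choose_modEq_choose_mod_mul_choose_div_nat (n := a + b) (k := b) (p := 2)
  rw [hL.dvd_iff (dvd_refl 2)]
  rcases Nat.mod_two_eq_zero_or_one a with ha | ha <;>
    rcases Nat.mod_two_eq_zero_or_one b with hb | hb
  · rw [show (a + b) % 2 = 0 by omega, hb, ha, show (a + b) / 2 = a / 2 + b / 2 by omega]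
    simp
  · rw [show (a + b) % 2 = 1 by omega, hb, ha, show (a + b) / 2 = a / 2 + b / 2 by omega]
    simp
  · rw [show (a + b) % 2 = 1 by omega, hb, ha, show (a + b) / 2 = a / 2 + b / 2 by omega]
    simp
  · rw [show (a + b) % 2 = 0 by omega, hb, ha]
    simp

lemma fibBinom_odd_iff_choose_odd (n : ℕ) :
    ¬ 2 ∣ fibBinom (4 * n) n ↔ ¬ 2 ∣ (n + n / 3).choose (n / 3) := by
  have hF := fibBinom_mul (3 * n) n
  rw [show 3 * n + n = 4 * n by ring] at hF
  have hF0 : fibBinom (4 * n) n ≠ 0 := by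
    intro h0
    rw [h0, zero_mul] at hF
    exact fibFact_ne_zero _ hF.symm
  have hv := congrArg (padicValNat 2) hF
  rw [padicValNat.mul hF0 (mul_ne_zero (fibFact_ne_zero _) (fibFact_ne_zero _)),
    padicValNat.mul (fibFact_ne_zero _) (fibFact_ne_zero _), padicValNat_fibFact,
    padicValNat_fibFact, padicValNat_fibFact, show 3 * n / 3 = n by omega,
    show 4 * n / 3 = n + n / 3 by omega] at hv
  have hC0 : (n + n / 3).choose (n / 3) ≠ 0 := (Nat.choose_pos (by omega)).ne'
  have hC := congrArg (padicValNat 2) (Nat.add_choose_mul_factorial_mul_factorial n (n / 3))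
  rw [padicValNat.mul (mul_ne_zero hC0 (Nat.factorial_ne_zero _))
    (Nat.factorial_ne_zero _), padicValNat.mul hC0 (Nat.factorial_ne_zero _)] at hC
  have hodd := odd_choose_add_iff n (n / 3)
  have h1 := dvd_iff_padicValNat_ne_zero (p := 2) hF0
  have h2 := dvd_iff_padicValNat_ne_zero (p := 2) hC0
  by_cases h : n % 2 = 1 ∧ n / 3 % 2 = 1
  · have : 2 ∣ (n + n / 3).choose (n / 3) := by tauto
    have : 2 ∣ fibBinom (4 * n) n := by
      rw [h1]
      omega
    tauto
  · rw [h1, h2, show padicValNat 2 (fibBinom (4 * n) n)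
      = padicValNat 2 ((n + n / 3).choose (n / 3)) by omega]

lemma two_pow_div_three (k : ℕ) : (2 * 2 ^ k + 1) / 3 % 2 = 1 := by
  have : 2 ^ k % 6 = 1 ∨ 2 ^ k % 6 = 2 ∨ 2 ^ k % 6 = 4 := by
    induction k with
    | zero => simp
    | succ k ih =>
      rw [pow_succ]
      omega
  omega

lemma choose_odd_iff_two_pow (n : ℕ) (hn : 0 < n) :
    ¬ 2 ∣ (n + n / 3).choose (n / 3) ↔ ∃ k : ℕ, n = 2 ^ k := by
  induction n using Nat.strong_induction_on with
  | _ n ih =>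
    rcases Nat.lt_or_ge n 2 with h | h
    · obtain rfl : n = 1 := by omega
      simpa using ⟨0, rfl⟩
    rw [odd_choose_add_iff, show n / 3 / 2 = n / 2 / 3 by omega, ih (n / 2) (by omega) (by omega)]
    constructor
    · rintro ⟨hodd, k, hk⟩
      have := two_pow_div_three k
      rcases Nat.mod_two_eq_zero_or_one n with h' | h'
      · exact ⟨k + 1, by rw [pow_succ]; omega⟩
      · rw [← hk, show 2 * (n / 2) + 1 = n by omega] at this
        exact absurd ⟨h', this⟩ hodd
    · rintro ⟨_ | k, hk⟩
      · omega
      · rw [pow_succ] at hk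
        exact ⟨by omega, k, by omega⟩

theorem fibonomial_four_n_choose_n_odd_iff (n : ℕ) (hn : 0 < n) :
    ¬ 2 ∣ fibBinom (4 * n) n ↔ ∃ k : ℕ, n = 2 ^ k := by
  exact (fibBinom_odd_iff_choose_odd n).trans (choose_odd_iff_two_pow n hn)
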